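/- arXiv:0704.1851 — 10 statements merged into one kernel-verified Lean document; each statement's English description precedes it below -/
import Mathlib

section
/- Let f : (0,∞) → ℝ be a differentiable function satisfying the Riccati differential inequality f'(t) + f(t)²/3 - 12 ≤ 0 for all t > 0, together with the initial asymptotic condition lim_{t→0⁺} t·f(t) = 3. Then f(t) ≤ 6·coth(2t) for every t > 0. -/
open Real Set Filter

/-- ODE comparison (δ = -1 case, radial quaternionic directions):
if `f' + f²/3 - 12 ≤ 0` on `(0,∞)` and `t·f(t) → 3` as `t → 0⁺`,
then `f(t) ≤ 6·coth(2t) = 6·cosh(2t)/sinh(2t)` for all `t > 0`. -/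
theorem riccati_comparison_coth (f f' : ℝ → ℝ)
    (hderiv : ∀ t ∈ Set.Ioi (0 : ℝ), HasDerivAt f (f' t) t)
    (hineq : ∀ t ∈ Set.Ioi (0 : ℝ), f' t + (f t) ^ 2 / 3 - 12 ≤ 0)
    (hinit : Tendsto (fun t => t * f t) (nhdsWithin 0 (Set.Ioi 0)) (nhds 3)) :
    ∀ t ∈ Set.Ioi (0 : ℝ), f t ≤ 6 * Real.cosh (2 * t) / Real.sinh (2 * t) := by
  have hs : ∀ t : ℝ, HasDerivAt (fun t => Real.sinh (2 * t)) (2 * Real.cosh (2 * t)) t := by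
    intro t
    have h := ((hasDerivAt_id t).const_mul (2 : ℝ)).sinh
    simp only [id, mul_one] at h
    exact h.congr_deriv (by ring)
  have hc : ∀ t : ℝ, HasDerivAt (fun t => Real.cosh (2 * t)) (2 * Real.sinh (2 * t)) t := by
    intro t
    have h := ((hasDerivAt_id t).const_mul (2 : ℝ)).cosh
    simp only [id, mul_one] at h
    exact h.congr_deriv (by ring)
  let φ : ℝ → ℝ := fun t =>
    Real.sinh (2 * t) ^ 2 * f t - 6 * (Real.sinh (2 * t) * Real.cosh (2 * t))
  have hφ : ∀ t ∈ Set.Ioi (0 : ℝ), HasDerivAt φ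
      (4 * Real.sinh (2 * t) * Real.cosh (2 * t) * f t + Real.sinh (2 * t) ^ 2 * f' t
        - 12 * (Real.cosh (2 * t) ^ 2 + Real.sinh (2 * t) ^ 2)) t := by
    intro t ht
    have h := (((hs t).pow 2).mul (hderiv t ht)).sub (((hs t).mul (hc t)).const_mul 6)
    refine h.congr_deriv ?_
    simp only [Pi.pow_apply]
    push_cast
    ring
  have hanti : AntitoneOn φ (Set.Ioi 0) := by
    apply antitoneOn_of_deriv_nonpos (convex_Ioi 0)
    · exact fun t ht => (hφ t ht).continuousAt.continuousWithinAt
    · rw [interior_Ioi]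
      exact fun t ht => (hφ t ht).differentiableAt.differentiableWithinAt
    · rw [interior_Ioi]
      intro t ht
      rw [(hφ t ht).deriv]
      have h1 := mul_nonneg (sq_nonneg (Real.sinh (2 * t))) (neg_nonneg.2 (hineq t ht))
      have h2 := sq_nonneg (Real.sinh (2 * t) * f t - 6 * Real.cosh (2 * t))
      nlinarith [h1, h2]
  have hs0 : Tendsto (fun t : ℝ => Real.sinh (2 * t)) (nhdsWithin 0 (Set.Ioi 0)) (nhds 0) := by
    have h := (hs 0).continuousAt.tendsto.mono_left (nhdsWithin_le_nhds (s := Set.Ioi (0 : ℝ)))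
    simpa using h
  have hc0 : Tendsto (fun t : ℝ => Real.cosh (2 * t)) (nhdsWithin 0 (Set.Ioi 0)) (nhds 1) := by
    have h := (hc 0).continuousAt.tendsto.mono_left (nhdsWithin_le_nhds (s := Set.Ioi (0 : ℝ)))
    simpa using h
  have hq : Tendsto (fun t : ℝ => t⁻¹ * Real.sinh (2 * t)) (nhdsWithin 0 (Set.Ioi 0))
      (nhds 2) := by
    have h := (hs 0).tendsto_slope_zero_right
    simpa using h
  have hlim : Tendsto φ (nhdsWithin 0 (Set.Ioi 0)) (nhds 0) := by
    have h := ((hs0.mul hq).mul hinit).sub ((hs0.mul hc0).const_mul 6)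
    have e : (0 : ℝ) * 2 * 3 - 6 * (0 * 1) = 0 := by norm_num
    rw [e] at h
    refine h.congr' ?_
    filter_upwards [self_mem_nhdsWithin] with t ht
    have ht0 : t ≠ 0 := ne_of_gt ht
    simp only [φ]
    field_simp
  intro t ht
  have ht' : (0 : ℝ) < t := ht
  have hle : φ t ≤ 0 := by
    refine ge_of_tendsto hlim ?_
    filter_upwards [Ioo_mem_nhdsGT ht'] with x hx
    exact hanti hx.1 ht hx.2.le
  have hpos : 0 < Real.sinh (2 * t) := Real.sinh_pos_iff.2 (by linarith)
  rw [le_div_iff₀ hpos]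
  simp only [φ] at hle
  by_contra hcon
  push Not at hcon
  nlinarith [mul_pos hpos (sub_pos.2 hcon)]
end

section
/- Let f : (0,∞) → ℝ be a differentiable function satisfying the Riccati differential inequality f'(t) + f(t)²/3 ≤ 0 for all t > 0, together with the initial asymptotic condition lim_{t→0⁺} t·f(t) = 3. Then f(t) ≤ 3/t for every t > 0. -/
open Real Set Filter

/-- ODE comparison (δ = 0 case, radial quaternionic directions):
if `f' + f²/3 ≤ 0` on `(0,∞)` and `t·f(t) → 3` as `t → 0⁺`,
then `f(t) ≤ 3/t` for all `t > 0`. -/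
theorem riccati_comparison_flat (f f' : ℝ → ℝ)
    (hderiv : ∀ t ∈ Set.Ioi (0 : ℝ), HasDerivAt f (f' t) t)
    (hineq : ∀ t ∈ Set.Ioi (0 : ℝ), f' t + (f t) ^ 2 / 3 ≤ 0)
    (hinit : Tendsto (fun t => t * f t) (nhdsWithin 0 (Set.Ioi 0)) (nhds 3)) :
    ∀ t ∈ Set.Ioi (0 : ℝ), f t ≤ 3 / t := by
  intro t ht
  have ht0 : 0 < t := ht
  by_cases hf : f t ≤ 0
  · exact hf.trans (by positivity)
  have hft : 0 < f t := not_le.mp hf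
  have hanti : AntitoneOn f (Set.Ioi 0) := by
    apply antitoneOn_of_hasDerivWithinAt_nonpos (f' := f') (convex_Ioi 0)
    · exact fun x hx => (hderiv x hx).continuousAt.continuousWithinAt
    · intro x hx
      rw [interior_Ioi] at hx
      exact (hderiv x hx).hasDerivWithinAt
    · intro x hx
      rw [interior_Ioi] at hx
      nlinarith [hineq x hx, sq_nonneg (f x)]
  have hpos : ∀ s, 0 < s → s ≤ t → 0 < f s := fun s h1 h2 =>
    hft.trans_le (hanti h1 ht h2)
  have hg : ∀ s ∈ Set.Ioc 0 t,
      HasDerivAt (fun s => (f s)⁻¹ - s / 3) (-f' s / f s ^ 2 - 1 / 3) s := fun s hs =>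
    ((hderiv s hs.1).inv (hpos s hs.1 hs.2).ne').sub ((hasDerivAt_id s).div_const 3)
  have hmono : MonotoneOn (fun s => (f s)⁻¹ - s / 3) (Set.Ioc 0 t) := by
    apply monotoneOn_of_hasDerivWithinAt_nonneg
      (f' := fun s => -f' s / f s ^ 2 - 1 / 3) (convex_Ioc 0 t)
    · exact fun x hx => (hg x hx).continuousAt.continuousWithinAt
    · exact fun x hx => (hg x (interior_subset hx)).hasDerivWithinAt
    · intro x hx
      have hx' := interior_subset hx
      have hp := hpos x hx'.1 hx'.2
      have := hineq x hx'.1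
      have h2 : 1 / 3 ≤ -f' x / f x ^ 2 := by
        rw [le_div_iff₀ (by positivity)]
        linarith
      simpa using h2
  have key : t / 3 ≤ (f t)⁻¹ := by
    by_contra hlt
    push Not at hlt
    have hi : 0 < (f t)⁻¹ := inv_pos.mpr hft
    have hs0 : 0 < t - 3 * (f t)⁻¹ := by linarith
    have hst : t - 3 * (f t)⁻¹ ≤ t := by linarith
    have h := hmono (show t - 3 * (f t)⁻¹ ∈ Set.Ioc 0 t from ⟨hs0, hst⟩)
      (show t ∈ Set.Ioc 0 t from ⟨ht0, le_rfl⟩) hst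
    have := inv_pos.mpr (hpos _ hs0 hst)
    simp only at h
    linarith
  rw [le_div_iff₀ ht0]
  have := mul_le_mul_of_nonneg_left key hft.le
  rw [mul_inv_cancel₀ hft.ne'] at this
  linarith
end

section
/- Let T > 0 and let f : (0,T) → ℝ be a differentiable function satisfying the Riccati differential inequality f'(t) + f(t)²/3 + 12 ≤ 0 for all t ∈ (0,T), together with the initial asymptotic condition lim_{t→0⁺} t·f(t) = 3. Then T ≤ π/2, and f(t) ≤ 6·cot(2t) for every t ∈ (0,T). -/
open Real Set Filter

/-- ODE comparison (δ = 1 case, radial quaternionic directions):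
if `f' + f²/3 + 12 ≤ 0` on `(0,T)` and `t·f(t) → 3` as `t → 0⁺`,
then `T ≤ π/2` and `f(t) ≤ 6·cot(2t)` for all `t ∈ (0,T)`. -/
theorem riccati_comparison_cot (T : ℝ) (hT : 0 < T) (f f' : ℝ → ℝ)
    (hderiv : ∀ t ∈ Set.Ioo (0 : ℝ) T, HasDerivAt f (f' t) t)
    (hineq : ∀ t ∈ Set.Ioo (0 : ℝ) T, f' t + (f t) ^ 2 / 3 + 12 ≤ 0)
    (hinit : Tendsto (fun t => t * f t) (nhdsWithin 0 (Set.Ioi 0)) (nhds 3)) :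
    T ≤ Real.pi / 2 ∧ ∀ t ∈ Set.Ioo (0 : ℝ) T, f t ≤ 6 * Real.cot (2 * t) := by
  have hd : ∀ t ∈ Set.Ioo (0 : ℝ) T, HasDerivAt (fun t => Real.arctan (f t / 6) + 2 * t)
      (1 / (1 + (f t / 6) ^ 2) * (f' t / 6) + 2 * 1) t := fun t ht =>
    (((hderiv t ht).div_const 6).arctan).add ((hasDerivAt_id t).const_mul 2)
  have hanti : AntitoneOn (fun t => Real.arctan (f t / 6) + 2 * t) (Set.Ioo (0 : ℝ) T) := by
    apply antitoneOn_of_deriv_nonpos (convex_Ioo 0 T)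
    · exact fun t ht => (hd t ht).continuousAt.continuousWithinAt
    · rw [interior_Ioo]
      exact fun t ht => (hd t ht).differentiableAt.differentiableWithinAt
    · rw [interior_Ioo]
      intro t ht
      rw [(hd t ht).deriv]
      have h := hineq t ht
      have hp : 0 < 1 + (f t / 6) ^ 2 := by positivity
      have : 1 / (1 + (f t / 6) ^ 2) * (f' t / 6) ≤ -2 := by
        rw [one_div, inv_mul_le_iff₀ hp]
        nlinarith
      linarith
  have hf : Tendsto f (nhdsWithin 0 (Set.Ioi 0)) atTop := by
    have h := hinit.pos_mul_atTop (by norm_num) (tendsto_inv_nhdsGT_zero (𝕜 := ℝ))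
    refine h.congr' ?_
    filter_upwards [self_mem_nhdsWithin] with t ht
    have : t ≠ 0 := ne_of_gt ht
    field_simp
  have hlim : Tendsto (fun t => Real.arctan (f t / 6) + 2 * t) (nhdsWithin 0 (Set.Ioi 0))
      (nhds (Real.pi / 2 + 2 * 0)) := by
    apply Tendsto.add
    · exact ((Real.tendsto_arctan_atTop.mono_right nhdsWithin_le_nhds).comp
        (hf.atTop_div_const (by norm_num : (0 : ℝ) < 6)))
    · exact ((continuous_const.mul continuous_id).tendsto (0 : ℝ)).mono_left nhdsWithin_le_nhds
  have key : ∀ t ∈ Set.Ioo (0 : ℝ) T, Real.arctan (f t / 6) + 2 * t ≤ Real.pi / 2 := by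
    intro t ht
    have : Real.arctan (f t / 6) + 2 * t ≤ Real.pi / 2 + 2 * 0 := by
      refine ge_of_tendsto hlim ?_
      filter_upwards [Ioo_mem_nhdsGT ht.1] with s hs
      exact hanti ⟨hs.1, hs.2.trans ht.2⟩ ht hs.2.le
    linarith
  constructor
  · by_contra! hc
    have := key (Real.pi / 2) ⟨by positivity, hc⟩
    have := Real.neg_pi_div_two_lt_arctan (f (Real.pi / 2) / 6)
    linarith
  · intro t ht
    have h := key t ht
    have h1 := Real.neg_pi_div_two_lt_arctan (f t / 6)
    have h2 : f t / 6 ≤ Real.tan (Real.pi / 2 - 2 * t) := by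
      rw [← Real.tan_arctan (f t / 6)]
      exact Real.strictMonoOn_tan.monotoneOn ⟨h1, Real.arctan_lt_pi_div_two _⟩
        ⟨by linarith, by linarith [ht.1]⟩ (by linarith)
    rw [Real.tan_pi_div_two_sub, Real.tan_eq_sin_div_cos, inv_div, ← Real.cot_eq_cos_div_sin] at h2
    linarith
end

section
/- Let h : (0,∞) → ℝ be a differentiable function satisfying the Riccati differential inequality h'(t) + h(t)²/4 - 4 ≤ 0 for all t > 0, together with the initial asymptotic condition lim_{t→0⁺} t·h(t) = 4. Then h(t) ≤ 4·coth(t) for every t > 0. -/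
open Real Set Filter

/-- ODE comparison (δ = -1 case, orthogonal quaternionic 4-planes):
if `h' + h²/4 - 4 ≤ 0` on `(0,∞)` and `t·h(t) → 4` as `t → 0⁺`,
then `h(t) ≤ 4·coth(t) = 4·cosh(t)/sinh(t)` for all `t > 0`. -/
theorem riccati_comparison_coth' (h h' : ℝ → ℝ)
    (hderiv : ∀ t ∈ Set.Ioi (0 : ℝ), HasDerivAt h (h' t) t)
    (hineq : ∀ t ∈ Set.Ioi (0 : ℝ), h' t + (h t) ^ 2 / 4 - 4 ≤ 0)
    (hinit : Tendsto (fun t => t * h t) (nhdsWithin 0 (Set.Ioi 0)) (nhds 4)) :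
    ∀ t ∈ Set.Ioi (0 : ℝ), h t ≤ 4 * Real.cosh t / Real.sinh t := by
  set F : ℝ → ℝ := fun t => h t * sinh t ^ 2 - 4 * (sinh t * cosh t) with hF
  have hFd : ∀ t ∈ Set.Ioi (0 : ℝ), HasDerivAt F
      (h' t * sinh t ^ 2 + h t * (2 * sinh t * cosh t)
        - 4 * (cosh t * cosh t + sinh t * sinh t)) t := by
    intro t ht
    have h1 := ((hderiv t ht).mul ((Real.hasDerivAt_sinh t).pow 2)).sub
      (((Real.hasDerivAt_sinh t).mul (Real.hasDerivAt_cosh t)).const_mul 4)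
    refine h1.congr_deriv ?_
    simp
  have hanti : AntitoneOn F (Set.Ioi 0) := by
    apply antitoneOn_of_deriv_nonpos (convex_Ioi 0)
    · exact fun t ht => (hFd t ht).continuousAt.continuousWithinAt
    · intro t ht
      rw [interior_Ioi] at ht
      exact (hFd t ht).differentiableAt.differentiableWithinAt
    · intro t ht
      rw [interior_Ioi] at ht
      rw [(hFd t ht).deriv]
      have h1 := mul_nonneg (sq_nonneg (sinh t)) (neg_nonneg.mpr (hineq t ht))
      nlinarith [sq_nonneg (h t * sinh t / 2 - 2 * cosh t)]
  have hs : Tendsto (fun t => sinh t / t) (nhdsWithin 0 (Set.Ioi 0)) (nhds 1) := by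
    have h1 := (Real.hasDerivAt_sinh 0).tendsto_slope
    rw [Real.cosh_zero] at h1
    have h2 := h1.mono_left (nhdsWithin_mono 0 (fun x (hx : x ∈ Set.Ioi (0 : ℝ)) => ne_of_gt hx))
    refine h2.congr (fun t => ?_)
    simp [slope_def_field]
  have hsinh : Tendsto sinh (nhdsWithin 0 (Set.Ioi 0)) (nhds 0) := by
    have h1 := Real.continuous_sinh.tendsto 0
    rw [Real.sinh_zero] at h1
    exact h1.mono_left nhdsWithin_le_nhds
  have hcosh : Tendsto cosh (nhdsWithin 0 (Set.Ioi 0)) (nhds 1) := by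
    have h1 := Real.continuous_cosh.tendsto 0
    rw [Real.cosh_zero] at h1
    exact h1.mono_left nhdsWithin_le_nhds
  have hlim : Tendsto F (nhdsWithin 0 (Set.Ioi 0)) (nhds 0) := by
    have h1 := ((hinit.mul hs).mul hsinh).sub ((hsinh.mul hcosh).const_mul 4)
    simp only [mul_zero, zero_mul, sub_zero] at h1
    refine h1.congr' ?_
    filter_upwards [self_mem_nhdsWithin] with t ht
    have ht0 : t ≠ 0 := ne_of_gt ht
    simp only [hF]
    field_simp
  intro t ht
  have hle : F t ≤ 0 := by
    refine ge_of_tendsto hlim ?_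
    filter_upwards [Ioo_mem_nhdsGT (show (0 : ℝ) < t from ht)] with s hs'
    exact hanti hs'.1 ht hs'.2.le
  have hpos : 0 < sinh t := Real.sinh_pos_iff.mpr ht
  rw [le_div_iff₀ hpos]
  simp only [hF] at hle
  by_contra hc
  push Not at hc
  nlinarith [mul_pos hpos (sub_pos.mpr hc)]
end

section
/- Let h : (0,∞) → ℝ be a differentiable function satisfying the Riccati differential inequality h'(t) + h(t)²/4 ≤ 0 for all t > 0, together with the initial asymptotic condition lim_{t→0⁺} t·h(t) = 4. Then h(t) ≤ 4/t for every t > 0. -/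
open Real Set Filter

/-- ODE comparison (δ = 0 case, orthogonal quaternionic 4-planes):
if `h' + h²/4 ≤ 0` on `(0,∞)` and `t·h(t) → 4` as `t → 0⁺`,
then `h(t) ≤ 4/t` for all `t > 0`. -/
theorem riccati_comparison_flat' (h h' : ℝ → ℝ)
    (hderiv : ∀ t ∈ Set.Ioi (0 : ℝ), HasDerivAt h (h' t) t)
    (hineq : ∀ t ∈ Set.Ioi (0 : ℝ), h' t + (h t) ^ 2 / 4 ≤ 0)
    (hinit : Tendsto (fun t => t * h t) (nhdsWithin 0 (Set.Ioi 0)) (nhds 4)) :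
    ∀ t ∈ Set.Ioi (0 : ℝ), h t ≤ 4 / t := by
  intro t ht
  have ht0 : 0 < t := ht
  by_contra hcon
  have hlt : 4 / t < h t := lt_of_not_ge hcon
  have hpos : 0 < h t := lt_trans (by positivity) hlt
  have hanti : AntitoneOn h (Set.Ioi (0 : ℝ)) := by
    apply antitoneOn_of_hasDerivWithinAt_nonpos (f' := h') (convex_Ioi 0)
    · exact fun x hx => (hderiv x hx).continuousAt.continuousWithinAt
    · intro x hx
      rw [interior_Ioi] at hx
      exact (hderiv x hx).hasDerivWithinAt
    · intro x hx
      rw [interior_Ioi] at hx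
      nlinarith [hineq x hx, sq_nonneg (h x)]
  have hp : ∀ x ∈ Set.Ioc 0 t, 0 < h x := fun x hx =>
    lt_of_lt_of_le hpos (hanti hx.1 ht hx.2)
  have hd : ∀ x ∈ Set.Ioc 0 t,
      HasDerivAt (fun y => 4 * (h y)⁻¹ - y) (4 * (-h' x / h x ^ 2) - 1) x := fun x hx =>
    (((hderiv x hx.1).inv (hp x hx).ne').const_mul 4).sub (hasDerivAt_id x)
  have hmono : MonotoneOn (fun y => 4 * (h y)⁻¹ - y) (Set.Ioc 0 t) := by
    apply monotoneOn_of_hasDerivWithinAt_nonneg (convex_Ioc 0 t)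
      (f' := fun x => 4 * (-h' x / h x ^ 2) - 1)
    · exact fun x hx => (hd x hx).continuousAt.continuousWithinAt
    · exact fun x hx => (hd x (interior_subset hx)).hasDerivWithinAt
    · intro x hx
      have hx' := interior_subset hx
      have h1 := hp x hx'
      have h2 := hineq x hx'.1
      have h3 : 1 / 4 ≤ -h' x / h x ^ 2 := by
        rw [le_div_iff₀ (by positivity)]
        linarith
      linarith
  have h4 : 4 * (h t)⁻¹ < t := by
    rw [div_lt_iff₀ ht0] at hlt
    rw [← div_eq_mul_inv, div_lt_iff₀ hpos]
    linarith
  have h5 : 0 < 4 * (h t)⁻¹ := by positivity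
  have hs : t - 4 * (h t)⁻¹ ∈ Set.Ioc 0 t := ⟨by linarith, by linarith⟩
  have h6 := hmono hs ⟨ht0, le_rfl⟩ hs.2
  have h7 := inv_pos.mpr (hp _ hs)
  simp only at h6
  linarith
end

section
/- Let T > 0 and let h : (0,T) → ℝ be a differentiable function satisfying the Riccati differential inequality h'(t) + h(t)²/4 + 4 ≤ 0 for all t ∈ (0,T), together with the initial asymptotic condition lim_{t→0⁺} t·h(t) = 4. Then T ≤ π, and h(t) ≤ 4·cot(t) for every t ∈ (0,T). -/
open Real Set Filter

/-- ODE comparison (δ = 1 case, orthogonal quaternionic 4-planes):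
if `h' + h²/4 + 4 ≤ 0` on `(0,T)` and `t·h(t) → 4` as `t → 0⁺`,
then `T ≤ π` and `h(t) ≤ 4·cot(t)` for all `t ∈ (0,T)`. -/
theorem riccati_comparison_cot' (T : ℝ) (hT : 0 < T) (h h' : ℝ → ℝ)
    (hderiv : ∀ t ∈ Set.Ioo (0 : ℝ) T, HasDerivAt h (h' t) t)
    (hineq : ∀ t ∈ Set.Ioo (0 : ℝ) T, h' t + (h t) ^ 2 / 4 + 4 ≤ 0)
    (hinit : Tendsto (fun t => t * h t) (nhdsWithin 0 (Set.Ioi 0)) (nhds 4)) :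
    T ≤ Real.pi ∧ ∀ t ∈ Set.Ioo (0 : ℝ) T, h t ≤ 4 * Real.cot t := by
  have hwd : ∀ t ∈ Set.Ioo (0 : ℝ) T, HasDerivAt
      (fun t => sin t ^ 2 * h t - 4 * (sin t * cos t))
      (2 * sin t * cos t * h t + sin t ^ 2 * h' t - 4 * (cos t * cos t - sin t * sin t)) t := by
    intro t ht
    have h1 := (((hasDerivAt_sin t).pow 2).mul (hderiv t ht)).sub
      (((hasDerivAt_sin t).mul (hasDerivAt_cos t)).const_mul 4)
    refine HasDerivAt.congr_deriv (f := fun t => sin t ^ 2 * h t - 4 * (sin t * cos t)) h1 ?_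
    simp
    ring
  have hanti : AntitoneOn (fun t => sin t ^ 2 * h t - 4 * (sin t * cos t)) (Set.Ioo 0 T) := by
    apply antitoneOn_of_deriv_nonpos (convex_Ioo 0 T)
    · exact fun t ht => (hwd t ht).continuousAt.continuousWithinAt
    · intro t ht
      rw [interior_Ioo] at ht
      exact (hwd t ht).differentiableAt.differentiableWithinAt
    · intro t ht
      rw [interior_Ioo] at ht
      rw [(hwd t ht).deriv]
      have h1 := mul_le_mul_of_nonneg_left (hineq t ht) (sq_nonneg (sin t))
      nlinarith [sq_nonneg (sin t * h t / 2 - 2 * cos t)]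
  have hlim : Tendsto (fun t => sin t ^ 2 * h t - 4 * (sin t * cos t))
      (nhdsWithin 0 (Set.Ioi 0)) (nhds 0) := by
    have hs : Tendsto (fun t => sin t) (nhdsWithin 0 (Set.Ioi 0)) (nhds 0) := by
      have := (continuous_sin.tendsto 0).mono_left (nhdsWithin_le_nhds (s := Set.Ioi 0))
      simpa using this
    have hc : Tendsto (fun t => cos t) (nhdsWithin 0 (Set.Ioi 0)) (nhds 1) := by
      have := (continuous_cos.tendsto 0).mono_left (nhdsWithin_le_nhds (s := Set.Ioi 0))
      simpa using this
    have hsinc : Tendsto (fun t => sinc t) (nhdsWithin 0 (Set.Ioi 0)) (nhds 1) := by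
      have := (continuous_sinc.tendsto 0).mono_left (nhdsWithin_le_nhds (s := Set.Ioi 0))
      simpa using this
    have h1 := ((hs.mul hsinc).mul hinit).sub ((hs.mul hc).const_mul 4)
    have h2 : Tendsto (fun t => sin t * sinc t * (t * h t) - 4 * (sin t * cos t))
      (nhdsWithin 0 (Set.Ioi 0)) (nhds 0) := by simpa using h1
    refine h2.congr' ?_
    filter_upwards [self_mem_nhdsWithin] with t ht
    have ht0 : t ≠ 0 := ne_of_gt ht
    rw [sinc_of_ne_zero ht0]
    field_simp
  have hle : ∀ t ∈ Set.Ioo (0 : ℝ) T, sin t ^ 2 * h t - 4 * (sin t * cos t) ≤ 0 := by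
    intro t ht
    refine ge_of_tendsto hlim ?_
    filter_upwards [Ioo_mem_nhdsGT ht.1] with s hs
    exact hanti ⟨hs.1, hs.2.trans ht.2⟩ ht hs.2.le
  have hTpi : T ≤ Real.pi := by
    by_contra hcon
    push Not at hcon
    have hpi : Real.pi ∈ Set.Ioo (0 : ℝ) T := ⟨pi_pos, hcon⟩
    have hzero : ∀ t ∈ Set.Ioo (0 : ℝ) Real.pi, sin t * h t - 4 * cos t = 0 := by
      intro t ht
      have htT : t ∈ Set.Ioo (0 : ℝ) T := ⟨ht.1, ht.2.trans hcon⟩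
      have h1 := hanti htT hpi ht.2.le
      simp only [sin_pi] at h1
      have h2 := hle t htT
      have h3 : sin t * (sin t * h t - 4 * cos t) = 0 := by nlinarith
      exact (mul_eq_zero.mp h3).resolve_left (sin_pos_of_pos_of_lt_pi ht.1 ht.2).ne'
    have hcont : ContinuousAt (fun t => sin t * h t - 4 * cos t) Real.pi :=
      (continuous_sin.continuousAt.mul (hderiv _ hpi).continuousAt).sub
        (continuous_cos.continuousAt.const_mul 4)
    have hA : Tendsto (fun t => sin t * h t - 4 * cos t) (nhdsWithin Real.pi (Set.Iio Real.pi))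
        (nhds (sin Real.pi * h Real.pi - 4 * cos Real.pi)) :=
      hcont.tendsto.mono_left nhdsWithin_le_nhds
    have hB : Tendsto (fun t => sin t * h t - 4 * cos t) (nhdsWithin Real.pi (Set.Iio Real.pi))
        (nhds 0) := by
      refine tendsto_const_nhds.congr' ?_
      filter_upwards [Ioo_mem_nhdsLT pi_pos] with t ht
      exact (hzero t ht).symm
    have := tendsto_nhds_unique hA hB
    simp at this
  refine ⟨hTpi, fun t ht => ?_⟩
  have hs : 0 < sin t := sin_pos_of_pos_of_lt_pi ht.1 (ht.2.trans_le hTpi)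
  rw [Real.cot_eq_cos_div_sin, ← mul_div_assoc, le_div_iff₀ hs]
  have h1 := hle t ht
  by_contra hcon
  push Not at hcon
  nlinarith [mul_lt_mul_of_pos_left hcon hs]
end

section
/- Let n ≥ 1 be an integer and let A : (0,∞) → (0,∞) be a differentiable positive function satisfying A'(r)/A(r) ≤ 6·coth(2r) + 4(n-1)·coth(r) for all r > 0. Define V(r) = ∫₀^r A(t) dt and V_QH(r) = ∫₀^r (sinh 2t)³·(sinh t)^{4(n-1)} dt (both integrals are finite). Then for all 0 < r₁ ≤ r₂ one has V(r₂)/V(r₁) ≤ V_QH(r₂)/V_QH(r₁). -/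
open Real Set Filter intervalIntegral

/-- Relative volume comparison (Corollary 2.3): if a positive differentiable
function `A` on `(0,∞)`, integrable on bounded intervals, satisfies
`A'(r)/A(r) ≤ 6·coth(2r) + 4(n-1)·coth(r)`, then with
`V(r) = ∫₀^r A` and `V_QH(r) = ∫₀^r (sinh 2t)³ (sinh t)^{4(n-1)} dt`,
one has `V(r₂)/V(r₁) ≤ V_QH(r₂)/V_QH(r₁)` for all `0 < r₁ ≤ r₂`. -/
theorem volume_comparison_QH (n : ℕ) (hn : 1 ≤ n) (A A' : ℝ → ℝ)
    (hpos : ∀ r ∈ Set.Ioi (0 : ℝ), 0 < A r)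
    (hderiv : ∀ r ∈ Set.Ioi (0 : ℝ), HasDerivAt A (A' r) r)
    (hint : ∀ r ∈ Set.Ioi (0 : ℝ), IntervalIntegrable A MeasureTheory.volume 0 r)
    (hineq : ∀ r ∈ Set.Ioi (0 : ℝ),
      A' r / A r ≤ 6 * Real.cosh (2 * r) / Real.sinh (2 * r)
        + 4 * ((n : ℝ) - 1) * (Real.cosh r / Real.sinh r)) :
    ∀ r₁ r₂ : ℝ, 0 < r₁ → r₁ ≤ r₂ →
      (∫ t in (0 : ℝ)..r₂, A t) / (∫ t in (0 : ℝ)..r₁, A t)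
        ≤ (∫ t in (0 : ℝ)..r₂, (Real.sinh (2 * t)) ^ 3 * (Real.sinh t) ^ (4 * (n - 1)))
          / (∫ t in (0 : ℝ)..r₁, (Real.sinh (2 * t)) ^ 3 * (Real.sinh t) ^ (4 * (n - 1))) := by
  obtain ⟨k, rfl⟩ : ∃ k, n = k + 1 := ⟨n - 1, by omega⟩
  intro r₁ r₂ h1 h12
  simp only [Nat.add_sub_cancel]
  set B : ℝ → ℝ := fun t => (Real.sinh (2 * t)) ^ 3 * (Real.sinh t) ^ (4 * k) with hB
  have hBc : Continuous B := by
    rw [hB]; fun_prop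
  have hBpos : ∀ r : ℝ, 0 < r → 0 < B r := by
    intro r hr
    have a : 0 < Real.sinh (2 * r) := Real.sinh_pos_iff.2 (by linarith)
    have b : 0 < Real.sinh r := Real.sinh_pos_iff.2 hr
    simp only [hB]
    positivity
  have hBd : ∀ r : ℝ, 0 < r → HasDerivAt B (B r * (6 * Real.cosh (2 * r) / Real.sinh (2 * r)
        + 4 * (k : ℝ) * (Real.cosh r / Real.sinh r))) r := by
    intro r hr
    have a : 0 < Real.sinh (2 * r) := Real.sinh_pos_iff.2 (by linarith)
    have b : 0 < Real.sinh r := Real.sinh_pos_iff.2 hr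
    have d1 : HasDerivAt (fun t : ℝ => 2 * t) 2 r := by
      simpa using (hasDerivAt_id r).const_mul (2 : ℝ)
    have d := (d1.sinh.pow 3).mul ((Real.hasDerivAt_sinh r).pow (4 * k))
    refine d.congr_deriv ?_
    simp only [hB, Pi.pow_apply]
    rcases k with _ | j
    · simp
      field_simp
      ring
    · have e : 4 * (j + 1) - 1 = 4 * j + 3 := by omega
      rw [e]
      push_cast
      field_simp
      ring
  have hanti : AntitoneOn (fun r => A r / B r) (Set.Ioi 0) := by
    have hd : ∀ r : ℝ, 0 < r → HasDerivAt (fun r => A r / B r)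
        ((A' r * B r - A r * (B r * (6 * Real.cosh (2 * r) / Real.sinh (2 * r)
        + 4 * (k : ℝ) * (Real.cosh r / Real.sinh r)))) / B r ^ 2) r :=
      fun r hr => (hderiv r hr).div (hBd r hr) (hBpos r hr).ne'
    apply antitoneOn_of_deriv_nonpos (convex_Ioi 0)
    · exact fun r hr => (hd r hr).continuousAt.continuousWithinAt
    · rw [interior_Ioi]
      exact fun r hr => (hd r hr).differentiableAt.differentiableWithinAt
    · rw [interior_Ioi]
      intro r hr
      rw [(hd r hr).deriv]
      apply div_nonpos_of_nonpos_of_nonneg _ (sq_nonneg _)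
      have h := hineq r hr
      rw [div_le_iff₀ (hpos r hr)] at h
      push_cast at h
      have h' := mul_le_mul_of_nonneg_right h (hBpos r hr).le
      ring_nf at h' ⊢
      linarith
  have h2 : 0 < r₂ := h1.trans_le h12
  set c := A r₁ / B r₁ with hc
  have hcB : ∀ x y : ℝ, IntervalIntegrable (fun t => c * B t) MeasureTheory.volume x y :=
    fun x y => (hBc.const_mul c).intervalIntegrable x y
  have hA12 : IntervalIntegrable A MeasureTheory.volume r₁ r₂ := (hint r₁ h1).symm.trans (hint r₂ h2)
  have i1 : c * (∫ t in (0 : ℝ)..r₁, B t) ≤ ∫ t in (0 : ℝ)..r₁, A t := by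
    rw [← intervalIntegral.integral_const_mul]
    apply intervalIntegral.integral_mono_on_of_le_Ioo h1.le (hcB _ _) (hint r₁ h1)
    intro t ht
    exact (le_div_iff₀ (hBpos t ht.1)).1 (hanti (Set.mem_Ioi.2 ht.1) (Set.mem_Ioi.2 h1) ht.2.le)
  have i2 : (∫ t in r₁..r₂, A t) ≤ c * (∫ t in r₁..r₂, B t) := by
    rw [← intervalIntegral.integral_const_mul]
    apply intervalIntegral.integral_mono_on_of_le_Ioo h12 hA12 (hcB _ _)
    intro t ht
    have ht0 : 0 < t := h1.trans ht.1
    exact (div_le_iff₀ (hBpos t ht0)).1 (hanti (Set.mem_Ioi.2 h1) (Set.mem_Ioi.2 ht0) ht.1.le)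
  have b1 : 0 < ∫ t in (0 : ℝ)..r₁, B t :=
    intervalIntegral.intervalIntegral_pos_of_pos_on (hBc.intervalIntegrable _ _)
      (fun t ht => hBpos t ht.1) h1
  have a1 : 0 < ∫ t in (0 : ℝ)..r₁, A t :=
    intervalIntegral.intervalIntegral_pos_of_pos_on (hint r₁ h1) (fun t ht => hpos t ht.1) h1
  have b2 : 0 ≤ ∫ t in r₁..r₂, B t :=
    intervalIntegral.integral_nonneg h12 (fun t ht => (hBpos t (h1.trans_le ht.1)).le)
  rw [← intervalIntegral.integral_add_adjacent_intervals (hint r₁ h1) hA12,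
    ← intervalIntegral.integral_add_adjacent_intervals (hBc.intervalIntegrable 0 r₁)
      (hBc.intervalIntegrable r₁ r₂), div_le_div_iff₀ a1 b1]
  have j1 := mul_le_mul_of_nonneg_right i2 b1.le
  have j2 := mul_le_mul_of_nonneg_right i1 b2
  linarith
end

section
/- Let N ≥ 4 and let H be a symmetric N×N real matrix. Suppose there exist four pairwise distinct indices i₀, a, b, c such that H_{i₀i₀} + H_{aa} + H_{bb} + H_{cc} = 0. Then the squared Frobenius norm of H satisfies Σ_{A,B} H_{AB}² ≥ (4/3)·Σ_A H_{i₀A}². -/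
open Finset

/-- Pointwise Bochner inequality (Theorem 0.5): if a symmetric `N×N` real
matrix `H` has vanishing partial trace over four pairwise distinct indices
`i₀, a, b, c` (i.e. `H_{i₀i₀} + H_{aa} + H_{bb} + H_{cc} = 0`), then
`Σ_{A,B} H_{AB}² ≥ (4/3)·Σ_A H_{i₀A}²`. -/
theorem frobenius_bochner_inequality (N : ℕ) (hN : 4 ≤ N)
    (H : Matrix (Fin N) (Fin N) ℝ) (hsym : H.IsSymm)
    (i₀ a b c : Fin N)
    (hab : i₀ ≠ a) (hac : i₀ ≠ b) (had : i₀ ≠ c)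
    (hbc : a ≠ b) (hbd : a ≠ c) (hcd : b ≠ c)
    (htrace : H i₀ i₀ + H a a + H b b + H c c = 0) :
    (∑ A : Fin N, ∑ B : Fin N, (H A B) ^ 2)
      ≥ 4 / 3 * ∑ A : Fin N, (H i₀ A) ^ 2 := by
  have hrow : ∀ A ∈ univ.erase i₀, (H i₀ A) ^ 2 + (H A A) ^ 2 ≤ ∑ B : Fin N, (H A B) ^ 2 := by
    intro A hA
    have hne : A ≠ i₀ := (Finset.mem_erase.mp hA).1
    have h1 : ∑ B ∈ ({i₀, A} : Finset (Fin N)), (H A B) ^ 2 ≤ ∑ B : Fin N, (H A B) ^ 2 :=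
      Finset.sum_le_sum_of_subset_of_nonneg (Finset.subset_univ _)
        (fun _ _ _ => sq_nonneg _)
    rw [Finset.sum_pair hne.symm, ← hsym.apply A i₀] at h1
    exact h1
  have hsum := Finset.sum_le_sum hrow
  rw [Finset.sum_add_distrib] at hsum
  have hdiag : ∑ A ∈ ({a, b, c} : Finset (Fin N)), (H A A) ^ 2
      ≤ ∑ A ∈ univ.erase i₀, (H A A) ^ 2 := by
    apply Finset.sum_le_sum_of_subset_of_nonneg
    · intro x hx
      simp only [Finset.mem_insert, Finset.mem_singleton] at hx
      rw [Finset.mem_erase]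
      refine ⟨?_, Finset.mem_univ _⟩
      rcases hx with rfl | rfl | rfl
      · exact hab.symm
      · exact hac.symm
      · exact had.symm
    · exact fun _ _ _ => sq_nonneg _
  rw [Finset.sum_insert (by simp [hbc, hbd]), Finset.sum_pair hcd] at hdiag
  have hR : 0 ≤ ∑ A ∈ univ.erase i₀, (H i₀ A) ^ 2 :=
    Finset.sum_nonneg (fun _ _ => sq_nonneg _)
  have e1 := Finset.add_sum_erase univ (fun A => ∑ B : Fin N, (H A B) ^ 2) (Finset.mem_univ i₀)
  have e2 := Finset.add_sum_erase univ (fun A => (H i₀ A) ^ 2) (Finset.mem_univ i₀)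
  have h0 : H i₀ i₀ = -(H a a + H b b + H c c) := by linarith
  have hcs : (H i₀ i₀) ^ 2 ≤ 3 * ((H a a) ^ 2 + ((H b b) ^ 2 + (H c c) ^ 2)) := by
    rw [h0]
    nlinarith [sq_nonneg (H a a - H b b), sq_nonneg (H a a - H c c), sq_nonneg (H b b - H c c)]
  linarith
end

section
/- Let N ≥ 4 and let H be a symmetric N×N real matrix. Suppose there exist four pairwise distinct indices i₀, a, b, c such that H_{i₀i₀} + H_{aa} + H_{bb} + H_{cc} = 0, and suppose equality holds in the Frobenius inequality, i.e. Σ_{A,B} H_{AB}² = (4/3)·Σ_A H_{i₀A}². Then there exists μ ∈ ℝ such that H_{i₀i₀} = -3μ, H_{aa} = H_{bb} = H_{cc} = μ, and H_{AB} = 0 for every pair (A,B) other than (i₀,i₀), (a,a), (b,b), (c,c). -/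
open Finset

/-- Rigidity in the Bochner inequality (equation (19.6) of Theorem 0.5): if a
symmetric `N×N` real matrix `H` has vanishing partial trace
`H_{i₀i₀} + H_{aa} + H_{bb} + H_{cc} = 0` over four pairwise distinct indices
and `Σ_{A,B} H_{AB}² = (4/3)·Σ_A H_{i₀A}²`, then `H = diag(-3μ, μ, μ, μ, 0, …, 0)`
in the obvious sense: `H_{i₀i₀} = -3μ`, `H_{aa} = H_{bb} = H_{cc} = μ`, and all
other entries vanish. -/
theorem frobenius_bochner_rigidity (N : ℕ) (hN : 4 ≤ N)
    (H : Matrix (Fin N) (Fin N) ℝ) (hsym : H.IsSymm)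
    (i₀ a b c : Fin N)
    (hab : i₀ ≠ a) (hac : i₀ ≠ b) (had : i₀ ≠ c)
    (hbc : a ≠ b) (hbd : a ≠ c) (hcd : b ≠ c)
    (htrace : H i₀ i₀ + H a a + H b b + H c c = 0)
    (heq : (∑ A : Fin N, ∑ B : Fin N, (H A B) ^ 2)
      = 4 / 3 * ∑ A : Fin N, (H i₀ A) ^ 2) :
    ∃ μ : ℝ, H i₀ i₀ = -3 * μ ∧ H a a = μ ∧ H b b = μ ∧ H c c = μ ∧
      ∀ A B : Fin N, (A, B) ≠ (i₀, i₀) → (A, B) ≠ (a, a) → (A, B) ≠ (b, b) →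
        (A, B) ≠ (c, c) → H A B = 0 := by
  have hs : ∀ A B, H A B = H B A := fun A B => hsym.apply B A
  set E : Finset (Fin N) := univ.erase i₀ with hE
  set D : Finset (Fin N × Fin N) := {(a, a), (b, b), (c, c)} with hD
  have hsplit : ∀ f : Fin N → ℝ, ∑ A, f A = f i₀ + ∑ A ∈ E, f A := fun f =>
    (Finset.add_sum_erase univ f (mem_univ i₀)).symm
  have hDE : D ⊆ E ×ˢ E := by
    intro p hp
    simp only [hD, mem_insert, mem_singleton] at hp
    rcases hp with rfl | rfl | rfl <;> simp [hE, hab.symm, hac.symm, had.symm]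
  have hDsum : ∑ p ∈ D, (H p.1 p.2) ^ 2 = H a a ^ 2 + (H b b ^ 2 + H c c ^ 2) := by
    rw [hD, sum_insert (by simp [hbc, hbd]), sum_insert (by simp [hcd]), sum_singleton]
  have hT : ∑ A ∈ E, ∑ B ∈ E, (H A B) ^ 2
      = ∑ p ∈ (E ×ˢ E) \ D, (H p.1 p.2) ^ 2 + (H a a ^ 2 + (H b b ^ 2 + H c c ^ 2)) := by
    rw [← hDsum, Finset.sum_sdiff hDE, Finset.sum_product]
  have hinner : ∑ A ∈ E, ∑ B, (H A B) ^ 2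
      = ∑ A ∈ E, (H i₀ A) ^ 2 + ∑ A ∈ E, ∑ B ∈ E, (H A B) ^ 2 := by
    rw [← Finset.sum_add_distrib]
    refine Finset.sum_congr rfl fun A _ => ?_
    rw [hsplit, hs A i₀]
  rw [hsplit (fun A => ∑ B, (H A B) ^ 2), hinner, hT, hsplit (fun A => (H i₀ A) ^ 2)] at heq
  have hR0 : 0 ≤ ∑ p ∈ (E ×ˢ E) \ D, (H p.1 p.2) ^ 2 := sum_nonneg fun _ _ => sq_nonneg _
  have hS0 : 0 ≤ ∑ A ∈ E, (H i₀ A) ^ 2 := sum_nonneg fun _ _ => sq_nonneg _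
  set R := ∑ p ∈ (E ×ˢ E) \ D, (H p.1 p.2) ^ 2 with hR
  set S := ∑ A ∈ E, (H i₀ A) ^ 2 with hS
  have hi : H i₀ i₀ = -(H a a + H b b + H c c) := by linarith
  have key : 3 * R + 2 * S + (H a a - H b b) ^ 2 + (H a a - H c c) ^ 2
      + (H b b - H c c) ^ 2 = 0 := by
    rw [hi] at heq
    linarith
  have q1 := sq_nonneg (H a a - H b b)
  have q2 := sq_nonneg (H a a - H c c)
  have q3 := sq_nonneg (H b b - H c c)
  have e1 : H a a - H b b = 0 := pow_eq_zero_iff two_ne_zero |>.1 (by linarith)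
  have e2 : H a a - H c c = 0 := pow_eq_zero_iff two_ne_zero |>.1 (by linarith)
  have hRz : R = 0 := by linarith
  have hSz : S = 0 := by linarith
  rw [hR, sum_eq_zero_iff_of_nonneg fun _ _ => sq_nonneg _] at hRz
  rw [hS, sum_eq_zero_iff_of_nonneg fun _ _ => sq_nonneg _] at hSz
  have hrow : ∀ A, A ≠ i₀ → H i₀ A = 0 := fun A hA =>
    pow_eq_zero_iff two_ne_zero |>.1 (hSz A (by simp [hE, hA]))
  refine ⟨H a a, by linarith, rfl, by linarith, by linarith, ?_⟩
  intro A B h0 h1 h2 h3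
  by_cases hA : A = i₀
  · subst hA
    exact hrow B fun h => h0 (by rw [h])
  by_cases hB : B = i₀
  · subst hB
    rw [hs]
    exact hrow A hA
  refine pow_eq_zero_iff two_ne_zero |>.1 (hRz (A, B) ?_)
  rw [mem_sdiff]
  refine ⟨by simp [hE, hA, hB], ?_⟩
  simp only [hD, mem_insert, mem_singleton, not_or]
  exact ⟨h1, h2, h3⟩
end

section
/- Let n ≥ 2 be an integer and let H be a symmetric 4n×4n real matrix with rows and columns indexed by {1, 2, …, 4n}. Suppose: (i) H_{1A} = 0 for every index A; (ii) H_{(n+1)(n+1)} + H_{(2n+1)(2n+1)} + H_{(3n+1)(3n+1)} = -6; (iii) for each α ∈ {2, …, n}, H_{αα} + H_{(n+α)(n+α)} + H_{(2n+α)(2n+α)} + H_{(3n+α)(3n+α)} = -4; and (iv) the squared Frobenius norm satisfies Σ_{A,B} H_{AB}² ≤ 4(n+2). Then H is diagonal, with H_{11} = 0, H_{AA} = -2 for A ∈ {n+1, 2n+1, 3n+1}, and H_{AA} = -1 for every other index A. -/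
open Finset

lemma sum_four_blocks (g : ℕ → ℝ) (n : ℕ) :
    ∑ A ∈ Finset.Icc 1 (4 * n), g A =
      ∑ i ∈ Finset.range n,
        (g (i + 1) + g (n + (i + 1)) + g (2 * n + (i + 1)) + g (3 * n + (i + 1))) := by
  have h : ∀ m : ℕ, ∑ A ∈ Finset.Icc 1 m, g A = ∑ i ∈ Finset.range m, g (i + 1) := by
    intro m
    induction m with
    | zero => simp
    | succ k ih => rw [Finset.sum_Icc_succ_top (by omega), ih, Finset.sum_range_succ]
  rw [h, show 4 * n = n + n + n + n by ring, Finset.sum_range_add, Finset.sum_range_add,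
    Finset.sum_range_add, Finset.sum_add_distrib, Finset.sum_add_distrib,
    Finset.sum_add_distrib]
  simp only [show 2 * n = n + n by ring, show 3 * n = n + n + n by ring, add_assoc]

/-- Hessian rigidity of the Busemann function (Part 1 of the proof of Theorem
0.6): a symmetric real matrix `H` with rows and columns indexed by
`{1, …, 4n}` (`n ≥ 2`) satisfying `H_{1A} = 0` for all `A`, the partial trace
constraints `H_{(n+1)(n+1)} + H_{(2n+1)(2n+1)} + H_{(3n+1)(3n+1)} = -6` and
`H_{αα} + H_{(n+α)(n+α)} + H_{(2n+α)(2n+α)} + H_{(3n+α)(3n+α)} = -4` for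
`α ∈ {2, …, n}`, and Frobenius norm bound `Σ_{A,B} H_{AB}² ≤ 4(n+2)`, must be
the diagonal matrix `diag(0, -1, …, -1, -2, -1, …, -1, -2, -1, …, -1, -2,
-1, …, -1)`. -/
theorem busemann_hessian_rigidity (n : ℕ) (hn : 2 ≤ n) (H : ℕ → ℕ → ℝ)
    (hsym : ∀ A ∈ Finset.Icc 1 (4 * n), ∀ B ∈ Finset.Icc 1 (4 * n), H A B = H B A)
    (hrow : ∀ A ∈ Finset.Icc 1 (4 * n), H 1 A = 0)
    (htr1 : H (n + 1) (n + 1) + H (2 * n + 1) (2 * n + 1)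
      + H (3 * n + 1) (3 * n + 1) = -6)
    (htr2 : ∀ α : ℕ, 2 ≤ α → α ≤ n →
      H α α + H (n + α) (n + α) + H (2 * n + α) (2 * n + α)
        + H (3 * n + α) (3 * n + α) = -4)
    (hfrob : ∑ A ∈ Finset.Icc 1 (4 * n), ∑ B ∈ Finset.Icc 1 (4 * n), (H A B) ^ 2
      ≤ 4 * ((n : ℝ) + 2)) :
    (∀ A ∈ Finset.Icc 1 (4 * n), ∀ B ∈ Finset.Icc 1 (4 * n), A ≠ B → H A B = 0) ∧
    H 1 1 = 0 ∧
    (∀ A ∈ ({n + 1, 2 * n + 1, 3 * n + 1} : Set ℕ), H A A = -2) ∧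
    (∀ A ∈ Finset.Icc 1 (4 * n), A ≠ 1 →
      A ∉ ({n + 1, 2 * n + 1, 3 * n + 1} : Set ℕ) → H A A = -1) := by
  classical
  obtain ⟨k, hnk⟩ : ∃ k, n = k + 1 := ⟨n - 1, by omega⟩
  have hsplit : ∀ f : ℕ → ℝ, ∑ i ∈ Finset.range n, f i =
      ∑ i ∈ Finset.range k, f (i + 1) + f 0 := by
    intro f
    rw [hnk, Finset.sum_range_succ']
  set D : ℕ → ℝ := fun A => if A = 1 then 0 else
    if A = n + 1 ∨ A = 2 * n + 1 ∨ A = 3 * n + 1 then -2 else -1 with hD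
  have D1 : D 1 = 0 := by simp [hD]
  have D2 : ∀ A, A = n + 1 ∨ A = 2 * n + 1 ∨ A = 3 * n + 1 → D A = -2 := by
    intro A hA
    have : A ≠ 1 := by omega
    simp only [hD, if_neg this, if_pos hA]
  have D3 : ∀ A, A ≠ 1 → ¬ (A = n + 1 ∨ A = 2 * n + 1 ∨ A = 3 * n + 1) → D A = -1 := by
    intro A h1 hA
    simp only [hD, if_neg h1, if_neg hA]
  have hg : ∑ A ∈ Finset.Icc 1 (4 * n), ((D A) ^ 2 - 2 * D A * H A A) = -(4 * ((n : ℝ) + 2)) := by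
    rw [sum_four_blocks, hsplit]
    rw [Finset.sum_congr rfl (g := fun _ => (-4 : ℝ)) ?_]
    swap
    · intro i hi
      rw [Finset.mem_range] at hi
      have ht := htr2 (i + 1 + 1) (by omega) (by omega)
      rw [D3 (i + 1 + 1) (by omega) (by omega), D3 (n + (i + 1 + 1)) (by omega) (by omega),
        D3 (2 * n + (i + 1 + 1)) (by omega) (by omega),
        D3 (3 * n + (i + 1 + 1)) (by omega) (by omega)]
      linarith
    simp only [zero_add, Finset.sum_const, Finset.card_range, nsmul_eq_mul]
    rw [D1, D2 (n + 1) (by omega), D2 (2 * n + 1) (by omega), D2 (3 * n + 1) (by omega)]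
    have : (n : ℝ) = k + 1 := by rw [hnk]; push_cast; ring
    rw [this]
    linarith
  have hrowsum : ∀ A ∈ Finset.Icc 1 (4 * n),
      ∑ B ∈ Finset.Icc 1 (4 * n), (H A B - if A = B then D A else 0) ^ 2 =
      ∑ B ∈ Finset.Icc 1 (4 * n), (H A B) ^ 2 + ((D A) ^ 2 - 2 * D A * H A A) := by
    intro A hA
    have : ∀ B ∈ Finset.Icc 1 (4 * n), (H A B - if A = B then D A else 0) ^ 2 =
        (H A B) ^ 2 + if A = B then ((D A) ^ 2 - 2 * D A * H A A) else 0 := by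
      intro B _
      split_ifs with h
      · subst h; ring
      · ring
    rw [Finset.sum_congr rfl this, Finset.sum_add_distrib, Finset.sum_ite_eq, if_pos hA]
  have htot : ∑ A ∈ Finset.Icc 1 (4 * n), ∑ B ∈ Finset.Icc 1 (4 * n),
      (H A B - if A = B then D A else 0) ^ 2 = 0 := by
    apply le_antisymm
    · rw [Finset.sum_congr rfl hrowsum, Finset.sum_add_distrib, hg]
      linarith
    · positivity
  have key : ∀ A ∈ Finset.Icc 1 (4 * n), ∀ B ∈ Finset.Icc 1 (4 * n),
      H A B = if A = B then D A else 0 := by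
    intro A hA B hB
    have h1 := (Finset.sum_eq_zero_iff_of_nonneg
      (fun A _ => Finset.sum_nonneg (fun B _ => sq_nonneg _))).1 htot A hA
    have h2 := (Finset.sum_eq_zero_iff_of_nonneg (fun B _ => sq_nonneg _)).1 h1 B hB
    exact sub_eq_zero.1 (pow_eq_zero_iff (two_ne_zero)|>.1 h2)
  have keyd : ∀ A ∈ Finset.Icc 1 (4 * n), H A A = D A := by
    intro A hA
    rw [key A hA A hA, if_pos rfl]
  refine ⟨?_, ?_, ?_, ?_⟩
  · intro A hA B hB hAB
    rw [key A hA B hB, if_neg hAB]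
  · rw [keyd 1 (by rw [Finset.mem_Icc]; omega), D1]
  · intro A hA
    simp only [Set.mem_insert_iff, Set.mem_singleton_iff] at hA
    rw [keyd A (by rw [Finset.mem_Icc]; omega), D2 A hA]
  · intro A hA h1 h2
    simp only [Set.mem_insert_iff, Set.mem_singleton_iff] at h2
    rw [keyd A hA, D3 A h1 h2]
end
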